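/- Let p be a prime, and let X, Z be the shift and clock matrices in Matrix (ZMod p) (ZMod p) ℂ. The ℂ-linear span of the set of generalized Pauli matrices { X^{a.val} · Z^{b.val} : a, b ∈ ZMod p } is the whole matrix algebra Matrix (ZMod p) (ZMod p) ℂ; that is, the generalized Pauli matrices span the full p × p matrix algebra (and hence form a basis). -/

import Mathlib

/-!
Since the entries of `Z` are pairwise distinct, Lagrange interpolation writes every diagonal matrix
as a polynomial in `Z` of degree less than the size of `Z`, so the powers of `Z` span the diagonal
matrices. The powers of `X` are the permutation matrices of the translations, which act transitively
on the indices, so multiplying the diagonal matrix units by them yields all matrix units.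
-/

open Matrix Submodule
open scoped Pointwise

section Powers

variable {ι K : Type*} [Fintype ι] [Field K] {v : ι → K}

theorem span_pow_eq_top_of_injective (hv : Function.Injective v) :
    span K ((v ^ ·) '' Set.Iio (Fintype.card ι)) = ⊤ := by
  classical
  refine eq_top_iff'.2 fun w => ?_
  let P := Lagrange.interpolate Finset.univ v w
  have hP : P.degree < Fintype.card ι := Lagrange.degree_interpolate_lt w hv.injOn
  have hw : Polynomial.aeval v P = w := by
    ext i
    rw [Polynomial.aeval_fn_apply, Polynomial.coe_aeval_eq_eval]
    exact Lagrange.eval_interpolate_at_node w hv.injOn (Finset.mem_univ i)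
  rw [← hw, Polynomial.aeval_eq_sum_range]
  refine sum_mem fun b _ => ?_
  by_cases hb : b < Fintype.card ι
  · exact smul_mem _ _ (subset_span ⟨b, hb, rfl⟩)
  · simp [Polynomial.coeff_eq_zero_of_degree_lt (hP.trans_le (by exact_mod_cast not_lt.1 hb))]

theorem span_diagonal_pow_eq_range_diagonalLinearMap [DecidableEq ι] (hv : Function.Injective v) :
    span K ((diagonal v ^ ·) '' Set.Iio (Fintype.card ι)) =
      LinearMap.range (diagonalLinearMap ι K K) := by
  rw [LinearMap.range_eq_map, ← span_pow_eq_top_of_injective hv, map_span, Set.image_image]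
  simp [diagonal_pow]

end Powers

section Permutations

variable {ι R : Type*} [Fintype ι] [DecidableEq ι]

theorem permMatrixHom_mul_single [NonAssocSemiring R] (σ : Equiv.Perm ι) (i j : ι) (c : R) :
    permMatrixHom σ * single i j c = single (σ i) j c := by
  ext k l
  simp [PEquiv.toMatrix_toPEquiv_mul, single_apply, Equiv.eq_symm_apply]

theorem span_permMatrixHom_mul_range_diagonalLinearMap_eq_top [CommSemiring R]
    {S : Set (Equiv.Perm ι)} (hS : ∀ i j, ∃ σ ∈ S, σ j = i) :
    span R (permMatrixHom (R := R) '' S) * LinearMap.range (diagonalLinearMap ι R R) = ⊤ := by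
  refine eq_top_iff'.2 fun M => ?_
  rw [matrix_eq_sum_single M]
  refine sum_mem fun i _ => sum_mem fun j _ => ?_
  obtain ⟨σ, hσ, rfl⟩ := hS i j
  rw [← permMatrixHom_mul_single]
  exact mul_mem_mul (subset_span (Set.mem_image_of_mem _ hσ))
    ⟨Pi.single j (M (σ j) j), diagonal_single _ _⟩

end Permutations

section ZMod

variable {n : ℕ} [NeZero n]

theorem image_Iio_eq_range_val {α : Type*} (f : ℕ → α) :
    f '' Set.Iio n = Set.range fun a : ZMod n => f a.val := by
  ext x
  constructor
  · rintro ⟨k, hk, rfl⟩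
    exact ⟨k, congrArg f (ZMod.val_cast_of_lt hk)⟩
  · rintro ⟨a, rfl⟩
    exact ⟨a.val, a.val_lt, rfl⟩

theorem injective_pow_val_of_isPrimitiveRoot {M : Type*} [CommMonoid M] {ζ : M}
    (hζ : IsPrimitiveRoot ζ n) : Function.Injective fun i : ZMod n => ζ ^ i.val :=
  fun i j hij => ZMod.val_injective n (hζ.pow_inj i.val_lt j.val_lt hij)

theorem shift_pow_val {R : Type*} [Semiring R] {X : Matrix (ZMod n) (ZMod n) R}
    (hX : ∀ i j, X i j = if i = j + 1 then 1 else 0) (a : ZMod n) :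
    X ^ a.val = permMatrixHom (Equiv.addRight a) := by
  have hX' : X = permMatrixHom (Equiv.addRight 1) := by
    ext i j
    simp [hX, PEquiv.toMatrix_apply, ← sub_eq_add_neg, sub_eq_iff_eq_add]
  rw [hX', ← map_pow, Equiv.nsmul_addRight, nsmul_one, ZMod.natCast_zmod_val]

theorem span_range_shift_pow_mul_range_diagonalLinearMap_eq_top {R : Type*} [CommSemiring R]
    {X : Matrix (ZMod n) (ZMod n) R} (hX : ∀ i j, X i j = if i = j + 1 then 1 else 0) :
    span R (Set.range fun a : ZMod n => X ^ a.val) *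
      LinearMap.range (diagonalLinearMap (ZMod n) R R) = ⊤ := by
  simp only [shift_pow_val hX]
  rw [← Function.comp_def, Set.range_comp]
  refine span_permMatrixHom_mul_range_diagonalLinearMap_eq_top fun i j => ?_
  exact ⟨Equiv.addRight (i - j), Set.mem_range_self _, by simp⟩

end ZMod

theorem pauli_span_top_general {n : ℕ} [NeZero n] {K : Type*} [Field K] {v : ZMod n → K}
    (hv : Function.Injective v) {X Z : Matrix (ZMod n) (ZMod n) K}
    (hX : ∀ i j, X i j = if i = j + 1 then 1 else 0)
    (hZ : ∀ i j, Z i j = if i = j then v i else 0) :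
    span K {M | ∃ a b : ZMod n, M = X ^ a.val * Z ^ b.val} = ⊤ := by
  have hZ' : Z = diagonal v := by
    ext i j
    rw [hZ, diagonal_apply]
  have hset : {M | ∃ a b : ZMod n, M = X ^ a.val * Z ^ b.val} =
      (Set.range fun a : ZMod n => X ^ a.val) * Set.range fun b : ZMod n => Z ^ b.val := by
    ext M
    simp [Set.mem_mul, eq_comm]
  have hspan : span K (Set.range fun b : ZMod n => Z ^ b.val) =
      LinearMap.range (diagonalLinearMap (ZMod n) K K) := by
    rw [← span_diagonal_pow_eq_range_diagonalLinearMap hv, ZMod.card,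
      image_Iio_eq_range_val, hZ']
  rw [hset, ← span_mul_span, hspan, span_range_shift_pow_mul_range_diagonalLinearMap_eq_top hX]

/-- The generalized Pauli matrices `X^{a.val} · Z^{b.val}` span the
full `p × p` matrix algebra over `ℂ`. -/
theorem pauli_span_top (p : ℕ) [Fact p.Prime]
    (ω : ℂ) (hω : ω = Complex.exp (2 * Real.pi * Complex.I / p))
    (X Z : Matrix (ZMod p) (ZMod p) ℂ)
    (hX : ∀ i j : ZMod p, X i j = if i = j + 1 then 1 else 0)
    (hZ : ∀ i j : ZMod p, Z i j = if i = j then ω ^ i.val else 0) :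
    Submodule.span ℂ
      {M : Matrix (ZMod p) (ZMod p) ℂ | ∃ a b : ZMod p, M = X ^ a.val * Z ^ b.val}
      = ⊤ := by
  have hprim : IsPrimitiveRoot ω p := hω ▸ Complex.isPrimitiveRoot_exp p (NeZero.ne p)
  exact pauli_span_top_general (injective_pow_val_of_isPrimitiveRoot hprim) hX hZ
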